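/- arXiv:1710.10892 — 2 statements merged into one kernel-verified Lean document; each statement's English description precedes it below -/
import Mathlib

section
/- Let s = (2,3,5,9). Then the inversion sequence e = (1,1,2,4) lies in I_{4,3}^(s), the maximum of asc over I_4^(s) equals 4, and there exists no e' ∈ I_{4,1}^(s) such that e + e' ∈ I_{4,4}^(s); consequently the lecture hall polytope P_4^{(2,3,5,9)} is not level. -/
open scoped BigOperators

noncomputable section

/-- The `s`-lecture hall polytope
`P_n^(s) = { x ∈ ℝ^n : 0 ≤ x_1/s_1 ≤ x_2/s_2 ≤ ⋯ ≤ x_n/s_n ≤ 1 }` (indices 0-based in Lean). -/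
def lhp (n : ℕ) (s : Fin n → ℤ) : Set (Fin n → ℝ) :=
  {x | (∀ i : Fin n, (i : ℕ) = 0 → 0 ≤ x i / (s i : ℝ)) ∧
       (∀ i j : Fin n, (j : ℕ) = (i : ℕ) + 1 → x i / (s i : ℝ) ≤ x j / (s j : ℝ)) ∧
       (∀ i : Fin n, (i : ℕ) = n - 1 → x i / (s i : ℝ) ≤ 1)}

/-- The vertex `(0,…,0,s_i,s_{i+1},…,s_n)` of the lecture hall polytope (real version). -/
def lhpVertexR (n : ℕ) (s : Fin n → ℤ) (i : Fin n) : Fin n → ℝ :=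
  fun j => if i ≤ j then (s j : ℝ) else 0

/-- The vertex `(0,…,0,s_i,s_{i+1},…,s_n)` of the lecture hall polytope (integer version). -/
def lhpVertexZ (n : ℕ) (s : Fin n → ℤ) (i : Fin n) : Fin n → ℤ :=
  fun j => if i ≤ j then s j else 0

/-- `cone(P_n^(s)) = span_{ℝ≥0} { (v,1) : v a vertex of P_n^(s) } ⊆ ℝ^{n+1}`:
the set of nonnegative combinations of `(0,1)` and the `(v_i,1)`. -/
def lhpCone (n : ℕ) (s : Fin n → ℤ) : Set (Fin (n + 1) → ℝ) :=
  {x | ∃ (a : ℝ) (b : Fin n → ℝ), 0 ≤ a ∧ (∀ i, 0 ≤ b i) ∧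
      x = a • (Fin.snoc (0 : Fin n → ℝ) 1 : Fin (n + 1) → ℝ) +
        ∑ i : Fin n, b i • (Fin.snoc (lhpVertexR n s i) 1 : Fin (n + 1) → ℝ)}

/-- Lattice points of `cone(P_n^(s))`. -/
def lhpConeZ (n : ℕ) (s : Fin n → ℤ) : Set (Fin (n + 1) → ℤ) :=
  {x | (fun i => (x i : ℝ)) ∈ lhpCone n s}

/-- Lattice points of the (relative) interior of `cone(P_n^(s))`
(the cone is full-dimensional, so the relative interior is the interior). -/
def lhpConeInteriorZ (n : ℕ) (s : Fin n → ℤ) : Set (Fin (n + 1) → ℤ) :=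
  {x | (fun i => (x i : ℝ)) ∈ interior (lhpCone n s)}

/-- `P_n^(s)` is Gorenstein: some integer point `c` satisfies
`c + (cone(P) ∩ ℤ^{n+1}) = cone(P)° ∩ ℤ^{n+1}`. -/
def IsGorenstein (n : ℕ) (s : Fin n → ℤ) : Prop :=
  ∃ c : Fin (n + 1) → ℤ,
    (fun x => c + x) '' lhpConeZ n s = lhpConeInteriorZ n s

/-- `P_n^(s)` is level: finitely many integer points `c_1,…,c_m`, all with the same
last coordinate, satisfy `⋃ (c_i + (cone(P) ∩ ℤ^{n+1})) = cone(P)° ∩ ℤ^{n+1}`. -/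
def IsLevel (n : ℕ) (s : Fin n → ℤ) : Prop :=
  ∃ C : Finset (Fin (n + 1) → ℤ), C.Nonempty ∧
    (∀ c ∈ C, ∀ c' ∈ C, c (Fin.last n) = c' (Fin.last n)) ∧
    (⋃ c ∈ C, (fun x => c + x) '' lhpConeZ n s) = lhpConeInteriorZ n s

/-- The `t`-lecture hall cone `C_m^(t) = { x ∈ ℝ^m : 0 ≤ x_1/t_1 ≤ ⋯ ≤ x_m/t_m }`. -/
def lhCone (m : ℕ) (t : Fin m → ℤ) : Set (Fin m → ℝ) :=
  {x | (∀ i : Fin m, (i : ℕ) = 0 → 0 ≤ x i / (t i : ℝ)) ∧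
       (∀ i j : Fin m, (j : ℕ) = (i : ℕ) + 1 → x i / (t i : ℝ) ≤ x j / (t j : ℝ))}

/-- `e` is an `s`-inversion sequence: `0 ≤ e_i < s_i` for all `i`. -/
def IsInvSeq (n : ℕ) (s : Fin n → ℤ) (e : Fin n → ℤ) : Prop :=
  ∀ i, 0 ≤ e i ∧ e i < s i

/-- The ratio `e_i / s_i` as a rational number. -/
def invRatio (n : ℕ) (s e : Fin n → ℤ) (i : Fin n) : ℚ := (e i : ℚ) / (s i : ℚ)

/-- The ratio `e_{i-1}/s_{i-1}`, with the convention `e_0 = 0`, `s_0 = 1`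
(paper 1-based indexing; here 0-based). -/
def prevRatio (n : ℕ) (s e : Fin n → ℤ) (i : Fin n) : ℚ :=
  if (i : ℕ) = 0 then 0
  else invRatio n s e ⟨(i : ℕ) - 1, lt_of_le_of_lt (Nat.sub_le _ _) i.isLt⟩

/-- The ascent set `Asc(e) ⊆ {0,…,n-1}` of an inversion sequence. -/
def ascSet (n : ℕ) (s e : Fin n → ℤ) : Finset (Fin n) :=
  Finset.univ.filter fun i => prevRatio n s e i < invRatio n s e i

/-- The number of ascents of an inversion sequence. -/
def asc (n : ℕ) (s e : Fin n → ℤ) : ℕ := (ascSet n s e).card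

/-- Addition of inversion sequences: componentwise mod `s_i`,
with representative in `{0,…,s_i - 1}`. -/
def invAdd (n : ℕ) (s : Fin n → ℤ) (e e' : Fin n → ℤ) : Fin n → ℤ :=
  fun i => (e i + e' i) % s i

/-- `hStar n s k = # I_{n,k}^(s)`, the number of `s`-inversion sequences with `k` ascents
(the `k`-th coefficient of the `s`-Eulerian polynomial). -/
def hStar (n : ℕ) (s : Fin n → ℤ) (k : ℕ) : ℕ :=
  Nat.card {e : Fin n → ℤ // IsInvSeq n s e ∧ asc n s e = k}

/-- `s` is `u`-generated by a sequence `u` of positive integers: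
`s_2 = u_1 s_1 - 1` and `s_{i+1} = u_i s_i - s_{i-1}` for `i > 1`. -/
def IsUGenerated (n : ℕ) (s : Fin n → ℤ) : Prop :=
  ∃ u : Fin n → ℤ,
    (∀ i : Fin n, (i : ℕ) < n - 1 → 0 < u i) ∧
    (∀ k j : Fin n, (j : ℕ) = (k : ℕ) + 1 → (k : ℕ) = 0 → s j = u k * s k - 1) ∧
    (∀ a k j : Fin n, (k : ℕ) = (a : ℕ) + 1 → (j : ℕ) = (k : ℕ) + 1 →
      s j = u k * s k - s a)

/-- The (half-open) fundamental parallelepiped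
`Π = { Σ η_i (v_i,1) : 0 ≤ η_i < 1 }` of `P_n^(s)`. -/
def fpp (n : ℕ) (s : Fin n → ℤ) : Set (Fin (n + 1) → ℝ) :=
  {x | ∃ (a : ℝ) (b : Fin n → ℝ),
      (0 ≤ a ∧ a < 1) ∧ (∀ i, 0 ≤ b i ∧ b i < 1) ∧
      x = a • (Fin.snoc (0 : Fin n → ℝ) 1 : Fin (n + 1) → ℝ) +
        ∑ i : Fin n, b i • (Fin.snoc (lhpVertexR n s i) 1 : Fin (n + 1) → ℝ)}

/-- The lattice point `λ(e) ∈ ℤ^{n+1}` associated to an inversion sequence `e`: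
`λ(e)_j = ℓ_j s_j - e_j` with `ℓ_j = #(Asc(e) ∩ {0,…,j-1})` (paper 1-based `j`),
and last coordinate `asc(e)`. -/
def lamOf (n : ℕ) (s : Fin n → ℤ) (e : Fin n → ℤ) : Fin (n + 1) → ℤ :=
  Fin.snoc
    (fun j : Fin n =>
      (((ascSet n s e).filter fun i : Fin n => (i : ℕ) ≤ (j : ℕ)).card : ℤ) * s j - e j)
    (asc n s e : ℤ)

/-- A coefficient sequence `h` (of a polynomial `Σ h_j z^j` of degree `r`) is palindromic:
`h_r ≠ 0`, `h_k = 0` for `k > r`, and `h_j = h_{r-j}` for `0 ≤ j ≤ r`. -/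
def IsPalindromic (h : ℕ → ℕ) : Prop :=
  ∃ r : ℕ, h r ≠ 0 ∧ (∀ k, r < k → h k = 0) ∧ ∀ j, j ≤ r → h j = h (r - j)

end

/-!
In the basis `(v_1,1), …, (v_n,1), (0,1)`, whose coordinates we call slacks, the cone over `P_n^(s)`
is the nonnegative orthant. The lattice points with all slacks in `[0, 1)` are the points `λ(e)`,
of height `asc(e)`, and `λ(e) + λ(e')` is congruent to `λ(e + e')` modulo the lattice spanned by the
basis. The reflection `x ↦ ∑ (v,1) - x` sends these points to interior points of the cone.

If all generators `c` of the interior have the same height, then every `∑ (v,1) - λ(e)` splits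
as `c + z` with `z` in the cone, and reflecting back, `λ(e) + z` has slacks in `[0, 1)` and a
height `r` independent of `e`. Hence `z = λ(e')` with `asc(e) + asc(e') = asc(e + e') = r`, and `r`
can only be the maximal number of ascents.

For `s = (2,3,5,9)` only `(1,2,4,8)` has four ascents, so `e = (1,1,2,4)`, which has three, would
need `e' = (0,1,2,4)`; but this `e'` has three ascents instead of one.
-/

namespace LectureHall

variable {n : ℕ} {s e : Fin n → ℤ} {x : Fin (n + 1) → ℝ} {y : Fin (n + 1) → ℤ}

theorem sum_Iic_succ {M : Type*} [AddCommMonoid M] (f : Fin (n + 1) → M) (i : Fin n) :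
    ∑ j ∈ Finset.Iic i.succ, f j = f i.succ + ∑ j ∈ Finset.Iic i.castSucc, f j := by
  have h : Finset.Iio i.succ = Finset.Iic i.castSucc := by
    ext j
    simp [Fin.le_castSucc_iff]
  rw [← Finset.Iio_insert, Finset.sum_insert (by simp), h]

theorem sum_Iic_zero {M : Type*} [AddCommMonoid M] (f : Fin (n + 1) → M) :
    ∑ j ∈ Finset.Iic 0, f j = f 0 := by
  rw [← bot_eq_zero, Finset.Iic_bot, Finset.sum_singleton]

theorem sum_Iic_last {M : Type*} [AddCommMonoid M] (f : Fin (n + 1) → M) :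
    ∑ j ∈ Finset.Iic (Fin.last n), f j = ∑ j, f j := by
  rw [← Fin.top_eq_last, Finset.Iic_top]

/-! ### Coordinates on the cone -/

/-- The denominators `(s_1,…,s_n,1)`: the cone over `P_n^(s)` is the lecture hall cone of this
longer sequence. -/
def coneDenom (s : Fin n → ℤ) : Fin (n + 1) → ℤ := Fin.snoc s 1

theorem coneDenom_castSucc (i : Fin n) : coneDenom s i.castSucc = s i := by simp [coneDenom]

theorem coneDenom_last : coneDenom s (Fin.last n) = 1 := by simp [coneDenom]

theorem coneDenom_pos (hs : ∀ i, 0 < s i) (i : Fin (n + 1)) : 0 < coneDenom s i := by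
  cases i using Fin.lastCases with
  | last => simp [coneDenom_last]
  | cast i => simpa [coneDenom_castSucc] using hs i

/-- The coordinates of a point in the basis `(v_1,1),…,(v_n,1),(0,1)` of `ℝ^(n+1)`, namely
the differences of consecutive ratios `x_i / coneDenom s i` (preceded by `0`). -/
noncomputable def slack (s : Fin n → ℤ) : (Fin (n + 1) → ℝ) →ₗ[ℝ] (Fin (n + 1) → ℝ) where
  toFun x := Fin.cons (x 0 / coneDenom s 0) fun i =>
    x i.succ / coneDenom s i.succ - x i.castSucc / coneDenom s i.castSucc
  map_add' x y := by
    ext i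
    cases i using Fin.cases <;> simp <;> ring
  map_smul' c x := by
    ext i
    cases i using Fin.cases <;> simp <;> ring

/-- The point with coordinates `b` in the basis `(v_1,1),…,(v_n,1),(0,1)`. -/
def ofSlack (s : Fin n → ℤ) (b : Fin (n + 1) → ℝ) : Fin (n + 1) → ℝ :=
  fun i => coneDenom s i * ∑ j ∈ Finset.Iic i, b j

theorem slack_zero (x : Fin (n + 1) → ℝ) : slack s x 0 = x 0 / coneDenom s 0 := rfl

theorem slack_succ (x : Fin (n + 1) → ℝ) (i : Fin n) :
    slack s x i.succ =
      x i.succ / coneDenom s i.succ - x i.castSucc / coneDenom s i.castSucc := rfl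

theorem sum_Iic_slack (x : Fin (n + 1) → ℝ) (i : Fin (n + 1)) :
    ∑ j ∈ Finset.Iic i, slack s x j = x i / coneDenom s i := by
  induction i using Fin.induction with
  | zero => rw [sum_Iic_zero, slack_zero]
  | succ i ih => rw [sum_Iic_succ, ih, slack_succ, sub_add_cancel]

theorem sum_slack (x : Fin (n + 1) → ℝ) : ∑ i, slack s x i = x (Fin.last n) := by
  rw [← sum_Iic_last, sum_Iic_slack, coneDenom_last, Int.cast_one, div_one]

theorem ofSlack_slack (hs : ∀ i, 0 < s i) (x : Fin (n + 1) → ℝ) :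
    ofSlack s (slack s x) = x := by
  ext i
  rw [ofSlack, sum_Iic_slack, mul_div_cancel₀]
  exact_mod_cast (coneDenom_pos hs i).ne'

theorem slack_ofSlack (hs : ∀ i, 0 < s i) (b : Fin (n + 1) → ℝ) :
    slack s (ofSlack s b) = b := by
  have ratio (i : Fin (n + 1)) : ofSlack s b i / coneDenom s i = ∑ j ∈ Finset.Iic i, b j :=
    mul_div_cancel_left₀ _ (mod_cast (coneDenom_pos hs i).ne')
  ext i
  cases i using Fin.cases with
  | zero => rw [slack_zero, ratio, sum_Iic_zero]
  | succ i => rw [slack_succ, ratio, ratio, sum_Iic_succ, add_sub_cancel_right]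

theorem smul_add_sum_smul_vertex (a : ℝ) (b : Fin n → ℝ) :
    a • (Fin.snoc (0 : Fin n → ℝ) 1 : Fin (n + 1) → ℝ) +
        ∑ i : Fin n, b i • (Fin.snoc (lhpVertexR n s i) 1 : Fin (n + 1) → ℝ) =
      ofSlack s (Fin.snoc b a) := by
  ext j
  cases j using Fin.lastCases with
  | last => simp [ofSlack, coneDenom_last, sum_Iic_last, Fin.sum_univ_castSucc, add_comm]
  | cast j =>
    simp [ofSlack, coneDenom_castSucc, lhpVertexR, Fin.sum_Iic_castSucc, ← Finset.sum_filter,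
      Finset.filter_ge_eq_Iic, Finset.sum_mul, mul_comm (s j : ℝ)]

theorem eq_smul_add_sum_smul_vertex_iff (hs : ∀ i, 0 < s i) {a : ℝ} {b : Fin n → ℝ} :
    x = a • (Fin.snoc (0 : Fin n → ℝ) 1 : Fin (n + 1) → ℝ) +
        ∑ i : Fin n, b i • (Fin.snoc (lhpVertexR n s i) 1 : Fin (n + 1) → ℝ) ↔
      slack s x = Fin.snoc b a := by
  rw [smul_add_sum_smul_vertex]
  constructor
  · rintro rfl
    exact slack_ofSlack hs _
  · intro h
    rw [← h, ofSlack_slack hs]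

theorem exists_eq_smul_add_sum_smul_vertex_iff (hs : ∀ i, 0 < s i) (p : ℝ → Prop) :
    (∃ (a : ℝ) (b : Fin n → ℝ), p a ∧ (∀ i, p (b i)) ∧
      x = a • (Fin.snoc (0 : Fin n → ℝ) 1 : Fin (n + 1) → ℝ) +
        ∑ i : Fin n, b i • (Fin.snoc (lhpVertexR n s i) 1 : Fin (n + 1) → ℝ)) ↔
      ∀ i, p (slack s x i) := by
  simp only [eq_smul_add_sum_smul_vertex_iff hs]
  constructor
  · rintro ⟨a, b, ha, hb, h⟩
    simpa [h, Fin.forall_fin_succ'] using ⟨hb, ha⟩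
  · intro h
    exact ⟨_, _, h _, fun i => h i.castSucc, (Fin.snoc_init_self _).symm⟩

theorem mem_lhpCone_iff (hs : ∀ i, 0 < s i) : x ∈ lhpCone n s ↔ ∀ i, 0 ≤ slack s x i :=
  exists_eq_smul_add_sum_smul_vertex_iff hs (0 ≤ ·)

theorem mem_fpp_iff (hs : ∀ i, 0 < s i) :
    x ∈ fpp n s ↔ ∀ i, 0 ≤ slack s x i ∧ slack s x i < 1 :=
  exists_eq_smul_add_sum_smul_vertex_iff hs fun t => 0 ≤ t ∧ t < 1

theorem mem_interior_lhpCone_iff (hs : ∀ i, 0 < s i) :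
    x ∈ interior (lhpCone n s) ↔ ∀ i, 0 < slack s x i := by
  have cone_eq : lhpCone n s = slack s ⁻¹' Set.univ.pi fun _ => Set.Ici 0 := by
    ext x
    simp only [mem_lhpCone_iff hs, Set.mem_preimage, Set.mem_univ_pi, Set.mem_Ici]
  have slack_open : IsOpenMap (slack s) :=
    (slack s).isOpenMap_of_finiteDimensional fun b => ⟨ofSlack s b, slack_ofSlack hs b⟩
  rw [cone_eq, ← slack_open.preimage_interior_eq_interior_preimage
    (slack s).continuous_of_finiteDimensional, interior_pi_set Set.finite_univ]
  simp

/-! ### Slacks of lattice points -/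

/-- `slack` on lattice points. -/
noncomputable def latticeSlack (s : Fin n → ℤ) : (Fin (n + 1) → ℤ) →+ (Fin (n + 1) → ℝ) :=
  (slack s).toAddMonoidHom.comp ((Int.castAddHom ℝ).compLeft _)

theorem latticeSlack_eq (y : Fin (n + 1) → ℤ) : latticeSlack s y = slack s fun i => (y i : ℝ) :=
  rfl

theorem mem_lhpConeZ_iff (hs : ∀ i, 0 < s i) :
    y ∈ lhpConeZ n s ↔ ∀ i, 0 ≤ latticeSlack s y i :=
  mem_lhpCone_iff hs

theorem mem_lhpConeInteriorZ_iff (hs : ∀ i, 0 < s i) :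
    y ∈ lhpConeInteriorZ n s ↔ ∀ i, 0 < latticeSlack s y i :=
  mem_interior_lhpCone_iff hs

/-- The lattice points of the half-open fundamental parallelepiped. -/
def fppZ (n : ℕ) (s : Fin n → ℤ) : Set (Fin (n + 1) → ℤ) :=
  {y | (fun i => (y i : ℝ)) ∈ fpp n s}

theorem mem_fppZ_iff (hs : ∀ i, 0 < s i) :
    y ∈ fppZ n s ↔ ∀ i, 0 ≤ latticeSlack s y i ∧ latticeSlack s y i < 1 :=
  mem_fpp_iff hs

theorem exists_int_latticeSlack_eq (hs : ∀ i, 0 < s i) (hy : ∀ i, coneDenom s i ∣ y i)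
    (i : Fin (n + 1)) : ∃ k : ℤ, latticeSlack s y i = k := by
  choose m hm using hy
  have ratio (i : Fin (n + 1)) : (y i : ℝ) / coneDenom s i = m i := by
    rw [hm, Int.cast_mul, mul_div_cancel_left₀]
    exact_mod_cast (coneDenom_pos hs i).ne'
  cases i using Fin.cases with
  | zero => exact ⟨m 0, by rw [latticeSlack_eq, slack_zero, ratio]⟩
  | succ i =>
    exact ⟨m i.succ - m i.castSucc, by
      rw [latticeSlack_eq, slack_succ, ratio, ratio, Int.cast_sub]⟩

/-! ### Ascents -/

theorem prevRatio_zero {s e : Fin (n + 1) → ℤ} : prevRatio (n + 1) s e 0 = 0 := rfl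

theorem prevRatio_succ {s e : Fin (n + 1) → ℤ} (i : Fin n) :
    prevRatio (n + 1) s e i.succ = invRatio (n + 1) s e i.castSucc := by
  simp [prevRatio, Fin.castSucc, Fin.castAdd, Fin.castLE]

theorem mem_ascSet {i : Fin n} : i ∈ ascSet n s e ↔ prevRatio n s e i < invRatio n s e i := by
  simp [ascSet]

theorem zero_mem_ascSet_iff {s e : Fin (n + 1) → ℤ} (hs : 0 < s 0) :
    0 ∈ ascSet (n + 1) s e ↔ 0 < e 0 := by
  have hs' : (0 : ℚ) < s 0 := mod_cast hs
  rw [mem_ascSet, prevRatio_zero, invRatio, div_pos_iff_of_pos_right hs', Int.cast_pos]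

theorem succ_mem_ascSet_iff {s e : Fin (n + 1) → ℤ} (hs : ∀ i, 0 < s i) (i : Fin n) :
    i.succ ∈ ascSet (n + 1) s e ↔ e i.castSucc * s i.succ < e i.succ * s i.castSucc := by
  have hs' (i : Fin (n + 1)) : (0 : ℚ) < s i := mod_cast hs i
  rw [mem_ascSet, prevRatio_succ, invRatio, invRatio, div_lt_div_iff₀ (hs' _) (hs' _)]
  norm_cast

theorem asc_succ_eq {s e : Fin (n + 1) → ℤ} (hs : ∀ i, 0 < s i) :
    asc (n + 1) s e = (if 0 < e 0 then 1 else 0) +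
      ∑ i : Fin n, if e i.castSucc * s i.succ < e i.succ * s i.castSucc then 1 else 0 := by
  rw [asc, ← Finset.filter_univ_mem (ascSet (n + 1) s e), Finset.card_filter, Fin.sum_univ_succ]
  simp only [zero_mem_ascSet_iff (hs 0), succ_mem_ascSet_iff hs]

theorem asc_le (s e : Fin n → ℤ) : asc n s e ≤ n :=
  (Finset.card_le_univ _).trans_eq (Fintype.card_fin n)

theorem asc_eq_iff : asc n s e = n ↔ ∀ i, i ∈ ascSet n s e := by
  rw [← Finset.eq_univ_iff_forall, ← Finset.card_eq_iff_eq_univ, Fintype.card_fin, asc]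

/-! ### The fundamental parallelepiped -/

/-- `e` extended by the entry `0` over the last denominator `1`. -/
def padded (e : Fin n → ℤ) : Fin (n + 1) → ℤ := Fin.snoc e 0

theorem padded_castSucc (i : Fin n) : padded e i.castSucc = e i := by simp [padded]

theorem padded_last : padded e (Fin.last n) = 0 := by simp [padded]

theorem mem_ascSet_iff (hs : ∀ i, 0 < s i) (i : Fin n) :
    i ∈ ascSet n s e ↔ 0 < latticeSlack s (padded e) i.castSucc := by
  have hs' (i : Fin n) : (0 : ℝ) < s i := mod_cast hs i
  cases n with
  | zero => exact i.elim0
  | succ n =>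
    rw [latticeSlack_eq]
    cases i using Fin.cases with
    | zero =>
      rw [zero_mem_ascSet_iff (hs 0), Fin.castSucc_zero, slack_zero,
        ← Fin.castSucc_zero (n := n + 1), padded_castSucc, coneDenom_castSucc,
        div_pos_iff_of_pos_right (hs' 0), Int.cast_pos]
    | succ i =>
      rw [succ_mem_ascSet_iff hs, ← Fin.succ_castSucc, slack_succ, Fin.succ_castSucc,
        coneDenom_castSucc, coneDenom_castSucc, padded_castSucc, padded_castSucc, sub_pos,
        div_lt_div_iff₀ (hs' _) (hs' _)]
      norm_cast

theorem padded_div_coneDenom_mem_Ico (he : IsInvSeq n s e) (i : Fin (n + 1)) :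
    (padded e i : ℝ) / coneDenom s i ∈ Set.Ico 0 1 := by
  cases i using Fin.lastCases with
  | last => simp [padded_last]
  | cast i =>
    obtain ⟨h0, h1⟩ := he i
    have hs : (0 : ℝ) < s i := mod_cast h0.trans_lt h1
    rw [padded_castSucc, coneDenom_castSucc, Set.mem_Ico, div_lt_one hs]
    exact ⟨div_nonneg (mod_cast h0) hs.le, mod_cast h1⟩

theorem latticeSlack_padded_mem_Ioo (he : IsInvSeq n s e) (i : Fin (n + 1)) :
    latticeSlack s (padded e) i ∈ Set.Ioo (-1) 1 := by
  rw [latticeSlack_eq]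
  cases i using Fin.cases with
  | zero =>
    obtain ⟨h0, h1⟩ := padded_div_coneDenom_mem_Ico he 0
    rw [slack_zero]
    constructor <;> linarith
  | succ i =>
    obtain ⟨h0, h1⟩ := padded_div_coneDenom_mem_Ico he i.castSucc
    obtain ⟨h2, h3⟩ := padded_div_coneDenom_mem_Ico he i.succ
    rw [slack_succ]
    constructor <;> linarith

theorem latticeSlack_padded_last_nonpos (he : IsInvSeq n s e) :
    latticeSlack s (padded e) (Fin.last n) ≤ 0 := by
  rw [latticeSlack_eq]
  cases n with
  | zero => rw [Fin.last_zero, slack_zero, ← Fin.last_zero, padded_last, Int.cast_zero, zero_div]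
  | succ n =>
    rw [← Fin.succ_last, slack_succ, Fin.succ_last, padded_last, Int.cast_zero, zero_div, zero_sub,
      neg_nonpos]
    exact (padded_div_coneDenom_mem_Ico he (Fin.last n).castSucc).1

/-- The indicator function of the ascents of `e`, with the value `0` at the last index. -/
noncomputable def ascIndicator (s e : Fin n → ℤ) : Fin (n + 1) → ℝ :=
  fun i => if 0 < latticeSlack s (padded e) i then 1 else 0

theorem ascIndicator_castSucc (hs : ∀ i, 0 < s i) (i : Fin n) :
    ascIndicator s e i.castSucc = if i ∈ ascSet n s e then 1 else 0 := by
  simp only [ascIndicator, mem_ascSet_iff hs]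

theorem ascIndicator_last (he : IsInvSeq n s e) : ascIndicator s e (Fin.last n) = 0 :=
  if_neg (latticeSlack_padded_last_nonpos he).not_gt

theorem sum_ascIndicator (hs : ∀ i, 0 < s i) (he : IsInvSeq n s e) :
    ∑ i, ascIndicator s e i = asc n s e := by
  simp [Fin.sum_univ_castSucc, ascIndicator_last he, ascIndicator_castSucc hs, asc]

theorem latticeSlack_lamOf (hs : ∀ i, 0 < s i) (he : IsInvSeq n s e) :
    latticeSlack s (lamOf n s e) = ascIndicator s e - latticeSlack s (padded e) := by
  have lam_add : (fun i => ((lamOf n s e + padded e) i : ℝ)) = ofSlack s (ascIndicator s e) := by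
    ext j
    cases j using Fin.lastCases with
    | last =>
      simp [lamOf, padded_last, ofSlack, coneDenom_last, sum_Iic_last, sum_ascIndicator hs he]
    | cast j =>
      have filter_eq : ((ascSet n s e).filter fun i : Fin n => (i : ℕ) ≤ (j : ℕ)) =
          Finset.Iic j ∩ ascSet n s e := by
        ext i
        simp [and_comm]
      simp [lamOf, filter_eq, padded_castSucc, ofSlack, coneDenom_castSucc,
        Fin.sum_Iic_castSucc, ascIndicator_castSucc hs, mul_comm, -Fin.val_fin_le]
  rw [eq_sub_iff_add_eq, ← map_add, latticeSlack_eq, lam_add, slack_ofSlack hs]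

theorem lamOf_mem_fppZ (hs : ∀ i, 0 < s i) (he : IsInvSeq n s e) : lamOf n s e ∈ fppZ n s := by
  refine (mem_fppZ_iff hs).2 fun i => ?_
  obtain ⟨lower, upper⟩ := latticeSlack_padded_mem_Ioo he i
  rw [latticeSlack_lamOf hs he, Pi.sub_apply, ascIndicator]
  split_ifs <;> constructor <;> linarith

theorem isInvSeq_emod (hs : ∀ i, 0 < s i) (f : Fin n → ℤ) : IsInvSeq n s fun i => f i % s i :=
  fun i => ⟨Int.emod_nonneg _ (hs i).ne', Int.emod_lt_of_pos _ (hs i)⟩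

/-- The inversion sequence of a lattice point: for a lattice point of the half-open fundamental
parallelepiped this inverts `e ↦ λ(e)`. -/
def residue (s : Fin n → ℤ) (y : Fin (n + 1) → ℤ) : Fin n → ℤ :=
  fun i => -y i.castSucc % s i

theorem isInvSeq_residue (hs : ∀ i, 0 < s i) (y : Fin (n + 1) → ℤ) :
    IsInvSeq n s (residue s y) :=
  isInvSeq_emod hs _

theorem isInvSeq_invAdd (hs : ∀ i, 0 < s i) (e e' : Fin n → ℤ) :
    IsInvSeq n s (invAdd n s e e') :=
  isInvSeq_emod hs _

theorem coneDenom_dvd_add_padded_residue (y : Fin (n + 1) → ℤ) (i : Fin (n + 1)) :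
    coneDenom s i ∣ (y + padded (residue s y)) i := by
  cases i using Fin.lastCases with
  | last => simp [coneDenom_last]
  | cast i =>
    have h : s i ∣ residue s y i - -y i.castSucc := Int.dvd_sub_self_of_emod_eq rfl
    rwa [coneDenom_castSucc, Pi.add_apply, padded_castSucc, add_comm, ← sub_neg_eq_add]

theorem latticeSlack_add_padded_residue (hs : ∀ i, 0 < s i) (hy : y ∈ fppZ n s) :
    latticeSlack s (y + padded (residue s y)) = ascIndicator s (residue s y) := by
  ext i
  obtain ⟨k, hk⟩ := exists_int_latticeSlack_eq hs (coneDenom_dvd_add_padded_residue y) i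
  obtain ⟨lower, upper⟩ := latticeSlack_padded_mem_Ioo (isInvSeq_residue hs y) i
  obtain ⟨nonneg, lt_one⟩ := (mem_fppZ_iff hs).1 hy i
  have split := hk
  rw [map_add, Pi.add_apply] at split
  rw [hk, ascIndicator]
  split_ifs with ascent
  · have : (0 : ℝ) < k ∧ (k : ℝ) < 2 := by constructor <;> linarith
    norm_cast at this ⊢
    omega
  · have : (-1 : ℝ) < k ∧ (k : ℝ) < 1 := by constructor <;> linarith
    norm_cast at this ⊢
    omega

theorem asc_residue (hs : ∀ i, 0 < s i) (hy : y ∈ fppZ n s) :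
    (asc n s (residue s y) : ℤ) = y (Fin.last n) := by
  have h : ∑ i, ascIndicator s (residue s y) i = y (Fin.last n) := by
    rw [← latticeSlack_add_padded_residue hs hy, latticeSlack_eq, sum_slack]
    simp [padded_last]
  rw [sum_ascIndicator hs (isInvSeq_residue hs y)] at h
  exact_mod_cast h

/-! ### Reflection and levelness -/

/-- The sum of the lattice points `(v_1,1),…,(v_n,1),(0,1)`. -/
def vertexSum (s : Fin n → ℤ) : Fin (n + 1) → ℤ := fun i => coneDenom s i * ((i : ℕ) + 1)

theorem latticeSlack_vertexSum (hs : ∀ i, 0 < s i) : latticeSlack s (vertexSum s) = 1 := by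
  have h : (fun i => (vertexSum s i : ℝ)) = ofSlack s 1 := by
    ext i
    simp [vertexSum, ofSlack]
  rw [latticeSlack_eq, h, slack_ofSlack hs]

theorem vertexSum_last : vertexSum s (Fin.last n) = n + 1 := by
  simp [vertexSum, coneDenom_last]

theorem vertexSum_sub_mem_interior (hs : ∀ i, 0 < s i) (hy : y ∈ fppZ n s) :
    vertexSum s - y ∈ lhpConeInteriorZ n s := by
  refine (mem_lhpConeInteriorZ_iff hs).2 fun i => ?_
  rw [map_sub, latticeSlack_vertexSum hs, Pi.sub_apply, Pi.one_apply]
  exact sub_pos.2 ((mem_fppZ_iff hs).1 hy i).2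

theorem lamOf_castSucc_modEq (s e : Fin n → ℤ) (i : Fin n) :
    lamOf n s e i.castSucc ≡ -e i [ZMOD s i] := by
  simp [lamOf, Int.ModEq, sub_eq_add_neg]

theorem residue_lamOf_add (s e : Fin n → ℤ) (y : Fin (n + 1) → ℤ) :
    residue s (lamOf n s e + y) = invAdd n s e (residue s y) := by
  ext i
  have h : -(lamOf n s e i.castSucc + y i.castSucc) ≡ e i + -y i.castSucc [ZMOD s i] := by
    simpa [add_comm] using ((lamOf_castSucc_modEq s e i).add_right (y i.castSucc)).neg
  simp only [residue, invAdd, Pi.add_apply, Int.add_emod_emod]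
  exact h

theorem lamOf_last : lamOf n s e (Fin.last n) = asc n s e := by simp [lamOf]

theorem mem_fppZ_of_add_mem (hs : ∀ i, 0 < s i) {x y : Fin (n + 1) → ℤ}
    (hx : x ∈ lhpConeZ n s) (hy : y ∈ lhpConeZ n s) (hxy : x + y ∈ fppZ n s) : y ∈ fppZ n s := by
  refine (mem_fppZ_iff hs).2 fun i => ⟨(mem_lhpConeZ_iff hs).1 hy i, ?_⟩
  have lt_one := ((mem_fppZ_iff hs).1 hxy i).2
  rw [map_add, Pi.add_apply] at lt_one
  exact (le_add_of_nonneg_left ((mem_lhpConeZ_iff hs).1 hx i)).trans_lt lt_one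

theorem vertexSum_sub_mem_fppZ (hs : ∀ i, 0 < s i) {c : Fin (n + 1) → ℤ}
    (hy : y ∈ fppZ n s) (hc : c ∈ lhpConeInteriorZ n s)
    (hle : vertexSum s - y - c ∈ lhpConeZ n s) : vertexSum s - c ∈ fppZ n s := by
  refine (mem_fppZ_iff hs).2 fun i => ?_
  have y_nonneg := ((mem_fppZ_iff hs).1 hy i).1
  have c_pos := (mem_lhpConeInteriorZ_iff hs).1 hc i
  have diff_nonneg := (mem_lhpConeZ_iff hs).1 hle i
  simp only [map_sub, latticeSlack_vertexSum hs, Pi.sub_apply, Pi.one_apply] at diff_nonneg ⊢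
  constructor <;> linarith

theorem exists_forall_sub_mem_of_isLevel (hs : ∀ i, 0 < s i) (h : IsLevel n s) :
    ∃ d : ℤ, ∀ y ∈ lhpConeInteriorZ n s,
      ∃ c ∈ lhpConeInteriorZ n s, c (Fin.last n) = d ∧ y - c ∈ lhpConeZ n s := by
  obtain ⟨C, ⟨c₀, hc₀⟩, same_height, cover⟩ := h
  refine ⟨c₀ (Fin.last n), fun y hy => ?_⟩
  rw [← cover] at hy ⊢
  obtain ⟨c, hc, z, hz, rfl⟩ := Set.mem_iUnion₂.1 hy
  have zero_mem : 0 ∈ lhpConeZ n s := (mem_lhpConeZ_iff hs).2 fun i => by simp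
  exact ⟨c, Set.mem_biUnion hc ⟨0, zero_mem, add_zero c⟩, same_height c hc c₀ hc₀, by simpa⟩

theorem exists_lamOf_add_mem_fppZ_of_isLevel (hs : ∀ i, 0 < s i) (h : IsLevel n s) :
    ∃ r : ℤ, ∀ e, IsInvSeq n s e → ∃ z ∈ lhpConeZ n s,
      lamOf n s e + z ∈ fppZ n s ∧ (lamOf n s e + z) (Fin.last n) = r := by
  obtain ⟨d, hd⟩ := exists_forall_sub_mem_of_isLevel hs h
  refine ⟨n + 1 - d, fun e he => ?_⟩
  have lam_mem := lamOf_mem_fppZ hs he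
  obtain ⟨c, hc, rfl, hz⟩ := hd _ (vertexSum_sub_mem_interior hs lam_mem)
  have sum_eq : lamOf n s e + (vertexSum s - lamOf n s e - c) = vertexSum s - c := by abel
  refine ⟨_, hz, ?_⟩
  rw [sum_eq, Pi.sub_apply, vertexSum_last]
  exact ⟨vertexSum_sub_mem_fppZ hs lam_mem hc hz, rfl⟩

theorem exists_asc_invAdd_of_isLevel (hs : ∀ i, 0 < s i) (h : IsLevel n s) :
    ∃ r : ℕ, ∀ e, IsInvSeq n s e → ∃ e', IsInvSeq n s e' ∧
      asc n s e + asc n s e' = r ∧ asc n s (invAdd n s e e') = r := by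
  obtain ⟨r, hr⟩ := exists_lamOf_add_mem_fppZ_of_isLevel hs h
  refine ⟨r.toNat, fun e he => ?_⟩
  obtain ⟨z, hz, sum_mem, rfl⟩ := hr e he
  have lam_mem : lamOf n s e ∈ lhpConeZ n s :=
    (mem_lhpConeZ_iff hs).2 fun i => ((mem_fppZ_iff hs).1 (lamOf_mem_fppZ hs he) i).1
  have asc_z := asc_residue hs (mem_fppZ_of_add_mem hs lam_mem hz sum_mem)
  have asc_sum := asc_residue hs sum_mem
  rw [residue_lamOf_add] at asc_sum
  rw [Pi.add_apply, lamOf_last] at asc_sum ⊢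
  exact ⟨residue s z, isInvSeq_residue hs z, by omega, by omega⟩

theorem exists_asc_invAdd_eq_of_isLevel (hs : ∀ i, 0 < s i) (h : IsLevel n s) {r : ℕ}
    (hr : IsGreatest {k | ∃ e, IsInvSeq n s e ∧ asc n s e = k} r) (he : IsInvSeq n s e) :
    ∃ e', IsInvSeq n s e' ∧ asc n s e + asc n s e' = r ∧ asc n s (invAdd n s e e') = r := by
  obtain ⟨q, hq⟩ := exists_asc_invAdd_of_isLevel hs h
  obtain ⟨f, hf, rfl⟩ := hr.1
  obtain ⟨f', -, add_eq, invAdd_eq⟩ := hq f hf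
  have le_max : q ≤ asc n s f := hr.2 ⟨_, isInvSeq_invAdd hs f f', invAdd_eq⟩
  obtain rfl : asc n s f = q := by omega
  exact hq e he

/-! ### The sequence `(2, 3, 5, 9)` -/

theorem pos_2359 (i : Fin 4) : 0 < ![(2 : ℤ), 3, 5, 9] i := by
  fin_cases i <;> decide

theorem isGreatest_asc_2359 :
    IsGreatest {k : ℕ | ∃ e : Fin 4 → ℤ, IsInvSeq 4 ![2, 3, 5, 9] e ∧
      asc 4 ![2, 3, 5, 9] e = k} 4 := by
  constructor
  · refine ⟨![1, 2, 4, 8], by simp [IsInvSeq, Fin.forall_fin_succ], ?_⟩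
    rw [asc_succ_eq pos_2359]
    decide
  · rintro _ ⟨e, -, rfl⟩
    exact asc_le _ e

theorem eq_of_asc_2359_eq_four {e : Fin 4 → ℤ} (he : IsInvSeq 4 ![2, 3, 5, 9] e)
    (h : asc 4 ![2, 3, 5, 9] e = 4) : e = ![1, 2, 4, 8] := by
  have ascents := asc_eq_iff.1 h
  have asc₀ : 0 < e 0 := (zero_mem_ascSet_iff (pos_2359 0)).1 (ascents 0)
  have asc₁ : e 0 * 3 < e 1 * 2 := (succ_mem_ascSet_iff pos_2359 0).1 (ascents 1)
  have asc₂ : e 1 * 5 < e 2 * 3 := (succ_mem_ascSet_iff pos_2359 1).1 (ascents 2)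
  have asc₃ : e 2 * 9 < e 3 * 5 := (succ_mem_ascSet_iff pos_2359 2).1 (ascents 3)
  have lt₃ : e 3 < 9 := (he 3).2
  ext i
  fin_cases i <;> simp <;> omega

theorem asc_ne_one_of_asc_invAdd_eq_four {e : Fin 4 → ℤ} (he : IsInvSeq 4 ![2, 3, 5, 9] e)
    (h : asc 4 ![2, 3, 5, 9] (invAdd 4 ![2, 3, 5, 9] ![1, 1, 2, 4] e) = 4) :
    asc 4 ![2, 3, 5, 9] e ≠ 1 := by
  have sum_eq := eq_of_asc_2359_eq_four (isInvSeq_invAdd pos_2359 _ _) h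
  have e_eq : e = ![0, 1, 2, 4] := by
    ext i
    have entry := congrFun sum_eq i
    have bounds := he i
    fin_cases i <;> simp [invAdd] at entry bounds ⊢ <;> omega
  rw [e_eq, asc_succ_eq pos_2359]
  decide

end LectureHall

open LectureHall

theorem lhp_2359_not_level :
    (IsInvSeq 4 ![2, 3, 5, 9] ![1, 1, 2, 4] ∧
      asc 4 ![2, 3, 5, 9] ![1, 1, 2, 4] = 3) ∧
    IsGreatest
      {k : ℕ | ∃ e : Fin 4 → ℤ, IsInvSeq 4 ![2, 3, 5, 9] e ∧
        asc 4 ![2, 3, 5, 9] e = k} 4 ∧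
    (¬ ∃ e' : Fin 4 → ℤ, IsInvSeq 4 ![2, 3, 5, 9] e' ∧
        asc 4 ![2, 3, 5, 9] e' = 1 ∧
        asc 4 ![2, 3, 5, 9] (invAdd 4 ![2, 3, 5, 9] ![1, 1, 2, 4] e') = 4) ∧
    ¬ IsLevel 4 ![2, 3, 5, 9] := by
  have he : IsInvSeq 4 ![2, 3, 5, 9] ![1, 1, 2, 4] := by simp [IsInvSeq, Fin.forall_fin_succ]
  have asc_e : asc 4 ![2, 3, 5, 9] ![1, 1, 2, 4] = 3 := by rw [asc_succ_eq pos_2359]; decide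
  refine ⟨⟨he, asc_e⟩, isGreatest_asc_2359, ?_, fun hlevel => ?_⟩
  · rintro ⟨e', he', asc_e', asc_sum⟩
    exact asc_ne_one_of_asc_invAdd_eq_four he' asc_sum asc_e'
  · obtain ⟨e', he', asc_add, asc_sum⟩ :=
      exists_asc_invAdd_eq_of_isLevel pos_2359 hlevel isGreatest_asc_2359 he
    exact asc_ne_one_of_asc_invAdd_eq_four he' asc_sum (by omega)
end

section
/- Let s = (s_1,…,s_n) be a sequence of positive integers. The s-lecture hall polytope P_n^(s) is level if and only if the (1,s_1,…,s_n)-lecture hall polytope P_{n+1}^{(1,s)} is level. -/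
open scoped BigOperators

/-!
The vertices of `P_{n+1}^{(1,s)}` are `(1, s)` and the points `(0, w)` with `w` a vertex of
`P_n^{(s)}`, so `P_{n+1}^{(1,s)}` is a lattice pyramid over `P_n^{(s)}`. The unimodular shear that
subtracts the first coordinate times `(s, 1)` from the remaining ones sends the homogenized apex
`(1, s, 1)` to the first unit vector, and thus identifies the cone of `P_{n+1}^{(1,s)}` with
`ℝ≥0 × cone(P_n^{(s)})`, lattice points and interiors included. Levelness passes between `S` and
`ℕ × S`: generators are lifted to first coordinate `1`, and conversely only generators of first
coordinate `1` can produce points of first coordinate `1`.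
-/

open Set
open scoped Pointwise

section GeneratedInOneDegree

variable {G H D : Type*}

/-- The set `I` is generated over `S` by finitely many elements of one common degree; for the
lattice points `S` of `cone(P)` and `I` of its interior, graded by height, this is levelness of `P`.
-/
def IsGeneratedInOneDegree [Add G] (deg : G → D) (S I : Set G) : Prop :=
  ∃ C : Finset G, C.Nonempty ∧ (∀ c ∈ C, ∀ c' ∈ C, deg c = deg c') ∧ (C : Set G) + S = I

theorem IsGeneratedInOneDegree.preimage [Add G] [Add H] {deg : H → D} {S I : Set H}
    (h : IsGeneratedInOneDegree deg S I) (e : G ≃+ H) :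
    IsGeneratedInOneDegree (deg ∘ e) (e ⁻¹' S) (e ⁻¹' I) := by
  obtain ⟨C, hne, hdeg, rfl⟩ := h
  refine ⟨C.map e.symm.toEquiv.toEmbedding, hne.map, ?_, ?_⟩
  · simpa using fun c hc c' hc' => hdeg (e c) hc (e c') hc'
  · have preimage_eq (A : Set H) : e ⁻¹' A = e.symm '' A :=
      (e.symm.toEquiv.image_eq_preimage_symm A).symm
    rw [preimage_eq, preimage_eq, image_add]
    simp

theorem isGeneratedInOneDegree_preimage_iff [Add G] [Add H] {deg : H → D} {S I : Set H}
    (e : G ≃+ H) :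
    IsGeneratedInOneDegree (deg ∘ e) (e ⁻¹' S) (e ⁻¹' I) ↔ IsGeneratedInOneDegree deg S I := by
  refine ⟨fun h => ?_, fun h => h.preimage e⟩
  simpa [Function.comp_def, preimage_preimage] using h.preimage e.symm

theorem IsGeneratedInOneDegree.prod [Add G] {deg : G → ℤ} {S I : Set G}
    (h : IsGeneratedInOneDegree deg S I) :
    IsGeneratedInOneDegree (fun p : ℤ × G => p.1 + deg p.2) (Ici 0 ×ˢ S) (Ioi 0 ×ˢ I) := by
  obtain ⟨C, hne, hdeg, rfl⟩ := h
  refine ⟨{1} ×ˢ C, (Finset.singleton_nonempty 1).product hne, ?_, ?_⟩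
  · rintro ⟨y, c⟩ hc ⟨y', c'⟩ hc'
    simp only [Finset.mem_product, Finset.mem_singleton] at hc hc'
    simp only [hc.1, hc'.1, hdeg c hc.2 c' hc'.2]
  · have Ici_shift : ({1} : Set ℤ) + Ici 0 = Ioi 0 := by
      rw [singleton_add, image_const_add_Ici]
      rfl
    rw [Finset.coe_product, Finset.coe_singleton, prod_add_prod_comm, Ici_shift]

theorem preimage_mk_one_add_eq [AddZeroClass G] {C : Set (ℤ × G)} {S I : Set G} (hS : 0 ∈ S)
    (hC : C + Ici 0 ×ˢ S = Ioi 0 ×ˢ I) : Prod.mk 1 ⁻¹' C + S = I := by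
  have hC_pos : ∀ c ∈ C, 0 < c.1 := fun c hc =>
    (hC.subset ⟨c, hc, 0, ⟨self_mem_Ici, hS⟩, add_zero c⟩).1
  ext x
  constructor
  · rintro ⟨c, hc, z, hz, rfl⟩
    exact (hC.subset ⟨(1, c), hc, (0, z), ⟨self_mem_Ici, hz⟩, rfl⟩).2
  · intro hx
    obtain ⟨⟨y, c⟩, hc, ⟨k, z⟩, ⟨hk, hz⟩, hsum⟩ :=
      hC.superset (mk_mem_prod (mem_Ioi.2 one_pos) hx)
    obtain ⟨hyk, rfl⟩ := Prod.mk.inj hsum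
    have hy : y = 1 := by
      have hy_pos : 0 < y := hC_pos _ hc
      have hk_nonneg : 0 ≤ k := hk
      omega
    exact ⟨c, hy ▸ hc, z, hz, rfl⟩

theorem isGeneratedInOneDegree_prod_iff [AddZeroClass G] {deg : G → ℤ} {S I : Set G}
    (hS : 0 ∈ S) :
    IsGeneratedInOneDegree (fun p : ℤ × G => p.1 + deg p.2) (Ici 0 ×ˢ S) (Ioi 0 ×ˢ I) ↔
      IsGeneratedInOneDegree deg S I := by
  refine ⟨?_, IsGeneratedInOneDegree.prod⟩
  rintro ⟨C, hne, hdeg, hC⟩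
  let slice : Finset G := C.preimage (Prod.mk 1) (Prod.mk_right_injective 1).injOn
  have hslice : (slice : Set G) + S = I := by
    rw [Finset.coe_preimage]
    exact preimage_mk_one_add_eq hS hC
  have hI : I.Nonempty := by
    have hsum : ((C : Set (ℤ × G)) + Ici 0 ×ˢ S).Nonempty :=
      (Finset.coe_nonempty.2 hne).add ⟨0, self_mem_Ici, hS⟩
    rw [hC] at hsum
    exact hsum.snd
  refine ⟨slice, Finset.coe_nonempty.1 (hslice ▸ hI).of_add_left, fun c hc c' hc' => ?_, hslice⟩
  exact add_left_cancel (hdeg _ (Finset.mem_preimage.1 hc) _ (Finset.mem_preimage.1 hc'))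

end GeneratedInOneDegree

section Shear

variable {R : Type*} [CommRing R] {m n : ℕ}

/-- The point `(x, 1)` at height one above `x`. -/
def homogenize (x : Fin n → R) : Fin (n + 1) → R := Fin.snoc x 1

theorem homogenize_cons (y : R) (x : Fin n → R) :
    homogenize (Fin.cons y x : Fin (n + 1) → R) = Fin.cons y (homogenize x) :=
  (Fin.cons_snoc_eq_snoc_cons (β := R) y x 1).symm

/-- The unimodular shear `(y, x) ↦ (y, x - y • v)`, which sends the apex `(1, v)` of a pyramid to
the first unit vector. It is used over `ℝ` for cones and over `ℤ` for their lattice points. -/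
def shear (v : Fin m → R) : (Fin (m + 1) → R) ≃ₗ[R] R × (Fin m → R) :=
  (Fin.consLinearEquiv R fun _ => R).symm ≪≫ₗ
    (LinearEquiv.refl R R).skewProd (LinearEquiv.refl R _) (LinearMap.toSpanSingleton R _ (-v))

theorem shear_apply (v : Fin m → R) (x : Fin (m + 1) → R) :
    shear v x = (x 0, Fin.tail x - x 0 • v) := by
  simp [shear, Fin.consLinearEquiv, sub_eq_add_neg]

theorem shear_cons (v : Fin m → R) (y : R) (x : Fin m → R) :
    shear v (Fin.cons y x) = (y, x - y • v) := by
  simp [shear_apply]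

theorem fst_add_last_shear_homogenize (v : Fin n → R) (x : Fin (n + 2) → R) :
    (shear (homogenize v) x).1 + (shear (homogenize v) x).2 (Fin.last n) =
      x (Fin.last (n + 1)) := by
  simp [shear_apply, homogenize, Fin.tail]

theorem shear_intCast (v : Fin m → ℤ) (x : Fin (m + 1) → ℤ) :
    shear (fun i => (v i : R)) (fun i => (x i : R)) =
      (((shear v x).1 : R), fun i => ((shear v x).2 i : R)) := by
  ext <;> simp [shear_apply, Fin.tail]

theorem homogenize_intCast (x : Fin n → ℤ) :
    homogenize (fun i => (x i : R)) = fun i => ((homogenize x : Fin (n + 1) → ℤ) i : R) := by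
  ext i
  cases i using Fin.lastCases <;> simp [homogenize]

end Shear

section LectureHallCone

variable {n : ℕ}

/-- The combination of the generators `(0, 1)` and `(v_i, 1)` of `cone(P_n^(s))` with coefficients
`a` and `b i`. -/
def lhpCombination (n : ℕ) (s : Fin n → ℤ) (a : ℝ) (b : Fin n → ℝ) : Fin (n + 1) → ℝ :=
  a • homogenize 0 + ∑ i, b i • homogenize (lhpVertexR n s i)

theorem mem_lhpCone {s : Fin n → ℤ} {x : Fin (n + 1) → ℝ} :
    x ∈ lhpCone n s ↔
      ∃ (a : ℝ) (b : Fin n → ℝ), 0 ≤ a ∧ (∀ i, 0 ≤ b i) ∧ x = lhpCombination n s a b :=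
  Iff.rfl

theorem lhpVertexR_cons_zero (a : ℤ) (s : Fin n → ℤ) :
    lhpVertexR (n + 1) (Fin.cons a s) 0 = Fin.cons (a : ℝ) fun i => (s i : ℝ) := by
  ext j
  cases j using Fin.cases <;> simp [lhpVertexR]

theorem lhpVertexR_cons_succ (a : ℤ) (s : Fin n → ℤ) (i : Fin n) :
    lhpVertexR (n + 1) (Fin.cons a s) i.succ = Fin.cons 0 (lhpVertexR n s i) := by
  ext j
  cases j using Fin.cases <;> simp [lhpVertexR]

theorem shear_lhpCombination_cons_one (s : Fin n → ℤ) (a : ℝ) (b : Fin (n + 1) → ℝ) :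
    shear (homogenize fun i => (s i : ℝ)) (lhpCombination (n + 1) (Fin.cons 1 s) a b) =
      (b 0, lhpCombination n s a (Fin.tail b)) := by
  set σ := shear (homogenize fun i => (s i : ℝ))
  have origin : σ (homogenize 0) = (0, homogenize 0) := by
    rw [← Matrix.cons_zero_zero]
    simp [σ, Matrix.vecCons, homogenize_cons, shear_cons]
  have apex : σ (homogenize (lhpVertexR (n + 1) (Fin.cons 1 s) 0)) = (1, 0) := by
    simp [σ, lhpVertexR_cons_zero, homogenize_cons, shear_cons]
  have base (i : Fin n) : σ (homogenize (lhpVertexR (n + 1) (Fin.cons 1 s) i.succ)) =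
      (0, homogenize (lhpVertexR n s i)) := by
    simp [σ, lhpVertexR_cons_succ, homogenize_cons, shear_cons]
  simp only [lhpCombination, Fin.sum_univ_succ, map_add, map_sum, map_smul, origin, apex, base]
  ext <;> simp [Prod.fst_sum, Prod.snd_sum, Fin.tail]

theorem lhpCone_cons_one (s : Fin n → ℤ) :
    lhpCone (n + 1) (Fin.cons 1 s) =
      shear (homogenize fun i => (s i : ℝ)) ⁻¹' (Ici 0 ×ˢ lhpCone n s) := by
  ext x
  constructor
  · intro hx
    obtain ⟨a, b, ha, hb, rfl⟩ := mem_lhpCone.1 hx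
    rw [mem_preimage, shear_lhpCombination_cons_one]
    exact ⟨hb 0, a, Fin.tail b, ha, fun i => hb i.succ, rfl⟩
  · rintro ⟨hy, a, b, ha, hb, hx⟩
    refine mem_lhpCone.2 ⟨a, Fin.cons _ b, ha, Fin.cons hy hb,
      (shear (homogenize fun i => (s i : ℝ))).injective ?_⟩
    rw [shear_lhpCombination_cons_one]
    exact Prod.ext rfl hx

theorem interior_lhpCone_cons_one (s : Fin n → ℤ) :
    interior (lhpCone (n + 1) (Fin.cons 1 s)) =
      shear (homogenize fun i => (s i : ℝ)) ⁻¹' (Ioi 0 ×ˢ interior (lhpCone n s)) := by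
  rw [lhpCone_cons_one, ← interior_Ici, ← interior_prod_eq]
  let σ := (shear (homogenize fun i => (s i : ℝ))).toContinuousLinearEquiv
  exact (σ.toHomeomorph.preimage_interior _).symm

theorem lhpConeZ_cons_one (s : Fin n → ℤ) :
    lhpConeZ (n + 1) (Fin.cons 1 s) = shear (homogenize s) ⁻¹' (Ici 0 ×ˢ lhpConeZ n s) := by
  ext x
  simp [lhpConeZ, lhpCone_cons_one, homogenize_intCast, shear_intCast]

theorem lhpConeInteriorZ_cons_one (s : Fin n → ℤ) :
    lhpConeInteriorZ (n + 1) (Fin.cons 1 s) =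
      shear (homogenize s) ⁻¹' (Ioi 0 ×ˢ lhpConeInteriorZ n s) := by
  ext x
  simp [lhpConeInteriorZ, interior_lhpCone_cons_one, homogenize_intCast, shear_intCast]

theorem zero_mem_lhpConeZ (s : Fin n → ℤ) : 0 ∈ lhpConeZ n s :=
  ⟨0, 0, le_rfl, fun _ => le_rfl, by ext; simp⟩

theorem isLevel_iff_isGeneratedInOneDegree (s : Fin n → ℤ) :
    IsLevel n s ↔ IsGeneratedInOneDegree (fun x : Fin (n + 1) → ℤ => x (Fin.last n))
      (lhpConeZ n s) (lhpConeInteriorZ n s) := by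
  simp only [IsLevel, IsGeneratedInOneDegree, ← iUnion_add_left_image, Finset.mem_coe]

end LectureHallCone

theorem lhp_level_iff_cons_one (n : ℕ) (s : Fin n → ℤ) (hs : ∀ i, 0 < s i) :
    IsLevel n s ↔ IsLevel (n + 1) (Fin.cons 1 s) := by
  let σ := (shear (homogenize s)).toAddEquiv
  have height_eq : (fun x : Fin (n + 2) → ℤ => x (Fin.last (n + 1))) =
      (fun p : ℤ × (Fin (n + 1) → ℤ) => p.1 + p.2 (Fin.last n)) ∘ σ :=
    funext fun x => (fst_add_last_shear_homogenize s x).symm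
  rw [isLevel_iff_isGeneratedInOneDegree, isLevel_iff_isGeneratedInOneDegree,
    lhpConeZ_cons_one, lhpConeInteriorZ_cons_one, height_eq,
    ← isGeneratedInOneDegree_prod_iff (zero_mem_lhpConeZ s)]
  exact (isGeneratedInOneDegree_preimage_iff σ).symm
end
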